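/- Let K be a semi-symmetric algebraic curvature tensor on a pseudo-Euclidean space (V,⟨·,·⟩), with Ricci operator Ric_K and minimal polynomial χ of Ric_K. Then V is the internal direct sum of the subspace V₀ := ker(Ric_K²) and the subspaces V_P := ker(P(Ric_K)), where P ranges over the monic irreducible real factors of χ different from X; moreover these subspaces are pairwise orthogonal with respect to ⟨·,·⟩, and the restriction of ⟨·,·⟩ to each of them is nondegenerate. -/

import Mathlib

open Polynomial

/-- The linear map `a ↦ K u a v`, whose trace gives the Ricci curvature `ric(u,v)`. -/
def ricMap {V : Type*} [AddCommGroup V] [Module ℝ V]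
    (K : V →ₗ[ℝ] V →ₗ[ℝ] Module.End ℝ V) (u v : V) : V →ₗ[ℝ] V where
  toFun a := K u a v
  map_add' a b := by simp
  map_smul' r a := by simp

/-- Traces of mutually adjoint endomorphisms agree. -/
theorem trace_eq_of_adj {V : Type*} [AddCommGroup V] [Module ℝ V] [FiniteDimensional ℝ V]
    (B : LinearMap.BilinForm ℝ V) (hB : ∀ u v, B u v = B v u) (hBnd : B.Nondegenerate)
    (f g : V →ₗ[ℝ] V) (h : ∀ a b, B (f a) b = B (g b) a) :
    LinearMap.trace ℝ V f = LinearMap.trace ℝ V g := by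
  let e := B.toDual hBnd
  have h1 : e.conj f = Module.Dual.transpose (R := ℝ) g := by
    apply LinearMap.ext
    intro φ
    obtain ⟨a, rfl⟩ := e.surjective φ
    apply LinearMap.ext
    intro b
    simp only [LinearEquiv.conj_apply_apply, LinearEquiv.symm_apply_apply,
      Module.Dual.transpose_apply, LinearMap.comp_apply]
    simp only [e, LinearMap.BilinForm.toDual_def]
    rw [h, hB]
  rw [← LinearMap.trace_conj' f e, h1, LinearMap.trace_transpose']

theorem nondeg_ext {V : Type*} [AddCommGroup V] [Module ℝ V] 
    (B : LinearMap.BilinForm ℝ V) (hBnd : B.Nondegenerate) (x y : V)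
    (h : ∀ t, B x t = B y t) : x = y := by
  rw [← sub_eq_zero]
  apply hBnd.1
  intro t
  simp [h t]

/-- Polynomials in a self-adjoint endomorphism are self-adjoint. -/
theorem aeval_selfAdj {V : Type*} [AddCommGroup V] [Module ℝ V]
    (B : LinearMap.BilinForm ℝ V) (A : Module.End ℝ V) (hA : ∀ u v, B (A u) v = B u (A v))
    (p : Polynomial ℝ) : ∀ u v, B (aeval A p u) v = B u (aeval A p v) := by
  induction p using Polynomial.induction_on' with
  | add p q hp hq => intro u v; simp [hp, hq]
  | monomial n a =>
    have : ∀ n : ℕ, ∀ u v, B ((A ^ n) u) v = B u ((A ^ n) v) := by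
      intro n
      induction n with
      | zero => intro u v; simp
      | succ n ih =>
        intro u v
        rw [pow_succ, Module.End.mul_apply, ih, hA, ← Module.End.mul_apply, ← pow_succ',
          ← pow_succ]
    intro u v
    simp [aeval_monomial, this]

/-- Kernels of polynomials in a self-adjoint endomorphism, coprime, are orthogonal. -/
theorem orth_of_coprime {V : Type*} [AddCommGroup V] [Module ℝ V]
    (B : LinearMap.BilinForm ℝ V) (A : Module.End ℝ V) (hA : ∀ u v, B (A u) v = B u (A v))
    (p q : Polynomial ℝ) (h : IsCoprime p q) (u v : V) (hu : aeval A p u = 0)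
    (hv : aeval A q v = 0) : B u v = 0 := by
  obtain ⟨a, b, hab⟩ := h
  have h1 : aeval A (a * p + b * q) u = u := by rw [hab]; simp
  rw [← h1, map_add, LinearMap.add_apply, map_mul, Module.End.mul_apply, hu, map_zero, zero_add,
    aeval_selfAdj B A hA, map_mul, Module.End.mul_apply, hv, map_zero, map_zero]

theorem ker_prod_le {V : Type*} [AddCommGroup V] [Module ℝ V] (A : Module.End ℝ V)
    {ι : Type*} (p : ι → Polynomial ℝ) (hp : Pairwise fun i j => IsCoprime (p i) (p j))
    (s : Finset ι) :
    LinearMap.ker (aeval A (∏ i ∈ s, p i)) ≤ ⨆ i, LinearMap.ker (aeval A (p i)) := by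
  classical
  induction s using Finset.induction_on with
  | empty => simp [Module.End.one_eq_id]
  | insert i s hi ih =>
    rw [Finset.prod_insert hi, ← Polynomial.sup_ker_aeval_eq_ker_aeval_mul_of_coprime]
    · exact sup_le (le_iSup (fun i => LinearMap.ker (aeval A (p i))) i) ih
    · apply IsCoprime.prod_right
      intro j hj
      exact hp (fun h => hi (h ▸ hj))

section curv
variable {V : Type*} [AddCommGroup V] [Module ℝ V] [FiniteDimensional ℝ V]
    (B : LinearMap.BilinForm ℝ V) (hB : ∀ u v, B u v = B v u) (hBnd : B.Nondegenerate)
    (K : V →ₗ[ℝ] V →ₗ[ℝ] Module.End ℝ V)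

/-- The key identity `K(Su,a)v = S K(u,a)v`. -/
theorem key_identity (hB : ∀ u v, B u v = B v u) (hBnd : B.Nondegenerate)
    (hK3 : ∀ u v w t, B (K u v w) t = B (K w t u) v)
    (hK4 : ∀ u v w, K u v w + K v w u + K w u v = 0)
    (S : Module.End ℝ V) (hS : ∀ u v, B (S u) v = B u (S v))
    (hc : ∀ u v w, K u v (S w) = S (K u v w)) :
    (∀ u v w, K (S u) v w = K u (S v) w) ∧ ∀ u v w, K (S u) v w = S (K u v w) := by
  have h1 : ∀ u v w, K (S u) v w = K u (S v) w := by
    intro u v w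
    apply nondeg_ext B hBnd
    intro t
    rw [hK3, hc, hS, ← hK3]
  refine ⟨h1, fun u a v => ?_⟩
  have e1 := hK4 (S u) a v
  have e2 := hK4 u (S a) v
  have e3 := hK4 u a (S v)
  have e0 := congrArg S (hK4 u a v)
  rw [map_add, map_add, map_zero] at e0
  rw [hc, ← h1 v u a] at e1
  rw [hc, ← h1 u a v] at e2
  rw [hc, ← h1 a v u] at e3
  have : (2 : ℝ) • K (S u) a v = (2 : ℝ) • S (K u a v) := by
    linear_combination (norm := module) e1 + e2 - e3 - e0
  exact smul_right_injective V (two_ne_zero : (2:ℝ) ≠ 0) this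

end curv

theorem stmt3 {V : Type*} [AddCommGroup V] [Module ℝ V] [FiniteDimensional ℝ V]
    (B : LinearMap.BilinForm ℝ V) (hB : ∀ u v, B u v = B v u) (hBnd : B.Nondegenerate)
    (K : V →ₗ[ℝ] V →ₗ[ℝ] Module.End ℝ V)
    (hK1 : ∀ u v, K u v = - K v u)
    (hK2 : ∀ u v w t, B (K u v w) t = - B (K u v t) w)
    (hK3 : ∀ u v w t, B (K u v w) t = B (K w t u) v)
    (hK4 : ∀ u v w, K u v w + K v w u + K w u v = 0)
    (hss : ∀ u v a b, K u v * K a b - K a b * K u v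
        = K ((K u v) a) b + K a ((K u v) b))
    (Ric : Module.End ℝ V)
    (hRic : ∀ u v, B (Ric u) v = LinearMap.trace ℝ V (ricMap K u v)) :
    ∀ f : Option {P : Polynomial ℝ //
        P.Monic ∧ Irreducible P ∧ P ≠ X ∧ P ∣ minpoly ℝ Ric} → Submodule ℝ V,
      (f = fun o => o.elim (LinearMap.ker (Ric ^ 2))
          (fun P => LinearMap.ker (Polynomial.aeval Ric P.1))) →
      iSupIndep f ∧
      (⨆ o, f o) = ⊤ ∧
      (∀ o o', o ≠ o' → ∀ u ∈ f o, ∀ v ∈ f o', B u v = 0) ∧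
      (∀ o, (B.restrict (f o)).Nondegenerate) := by
    -- the Ricci operator is self-adjoint
  have hA : ∀ u v, B (Ric u) v = B u (Ric v) := by
    intro u v
    rw [hB u, hRic, hRic]
    apply trace_eq_of_adj B hB hBnd
    intro a b
    exact hK3 u a v b
  -- the Ricci operator commutes with curvature operators
  have hcomm : ∀ u v, Commute (K u v) Ric := by
    intro u v
    apply LinearMap.ext
    intro a
    apply nondeg_ext B hBnd
    intro c
    simp only [Module.End.mul_apply]
    rw [hRic, hK2, hB, hRic a]
    have : ricMap K (K u v a) c = K u v * ricMap K a c - ricMap K a (K u v c)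
        - ricMap K a c * K u v := by
      apply LinearMap.ext
      intro b
      have := LinearMap.congr_fun (hss u v a b) c
      simp only [LinearMap.sub_apply, LinearMap.add_apply, Module.End.mul_apply] at this
      simp only [LinearMap.sub_apply, Module.End.mul_apply, ricMap, LinearMap.coe_mk,
        AddHom.coe_mk]
      rw [this]
      abel
    rw [this, map_sub, map_sub, LinearMap.trace_mul_comm]
    ring
  -- nilpotent polynomials in the Ricci operator are killed by it
  have hnil : ∀ p : Polynomial ℝ, IsNilpotent (aeval Ric p) → Ric * aeval Ric p = 0 := by
    intro p hp
    have hS := aeval_selfAdj B Ric hA p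
    have hc : ∀ u v w, K u v (aeval Ric p w) = aeval Ric p (K u v w) := by
      intro u v w
      have : Commute (K u v) (aeval Ric p) :=
        Algebra.commute_of_mem_adjoin_singleton_of_commute
          (Polynomial.aeval_mem_adjoin_singleton ℝ Ric) (hcomm u v)
      exact LinearMap.congr_fun this.eq w
    obtain ⟨k1, k2⟩ := key_identity B K hB hBnd hK3 hK4 _ hS hc
    apply LinearMap.ext
    intro u
    apply nondeg_ext B hBnd
    intro v
    rw [Module.End.mul_apply, hRic]
    have e1 : ricMap K (aeval Ric p u) v = aeval Ric p * ricMap K u v := by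
      apply LinearMap.ext
      intro a
      exact k2 u a v
    have e2 : ricMap K (aeval Ric p u) v = ricMap K u v * aeval Ric p := by
      apply LinearMap.ext
      intro a
      exact k1 u a v
    have hn : IsNilpotent (ricMap K (aeval Ric p u) v) := by
      rw [e1]
      exact Commute.isNilpotent_mul_right (e1.symm.trans e2) hp
    rw [(LinearMap.isNilpotent_trace_of_isNilpotent hn).eq_zero]
    simp
  intro f hf
  let p : Option {P : Polynomial ℝ //
        P.Monic ∧ Irreducible P ∧ P ≠ X ∧ P ∣ minpoly ℝ Ric} → Polynomial ℝ :=
    fun o => o.elim (X ^ 2) (fun P => P.1)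
  have hfp : ∀ o, f o = LinearMap.ker (aeval Ric (p o)) := by
    intro o
    subst hf
    cases o <;> simp [p]
  have hXP : ∀ P : {P : Polynomial ℝ //
        P.Monic ∧ Irreducible P ∧ P ≠ X ∧ P ∣ minpoly ℝ Ric}, IsCoprime (X ^ 2 : ℝ[X]) P.1 := by
    rintro ⟨P, h1, h2, h3, h4⟩
    apply IsCoprime.pow_left
    rw [irreducible_X.coprime_iff_not_dvd]
    intro h
    exact h3 (eq_of_monic_of_associated h1 monic_X
      (irreducible_X.associated_of_dvd h2 h).symm)
  have hcop : Pairwise fun i j => IsCoprime (p i) (p j) := by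
    rintro (_ | P) (_ | Q) hne
    · exact absurd rfl hne
    · exact hXP Q
    · exact (hXP P).symm
    · obtain ⟨P, h1, h2, h3, h4⟩ := P
      obtain ⟨Q, g1, g2, g3, g4⟩ := Q
      change IsCoprime P Q
      rw [h2.coprime_iff_not_dvd]
      intro h
      apply hne
      have := eq_of_monic_of_associated h1 g1 (h2.associated_of_dvd g2 h)
      subst this
      rfl
  have horth : ∀ o o', o ≠ o' → ∀ u ∈ f o, ∀ v ∈ f o', B u v = 0 := by
    intro o o' hne u hu v hv
    rw [hfp] at hu hv
    exact orth_of_coprime B Ric hA _ _ (hcop hne) u v hu hv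
  have hsup : (⨆ o, f o) = ⊤ := by
    classical
    have hχ : minpoly ℝ Ric ≠ 0 := minpoly.ne_zero (Algebra.IsIntegral.isIntegral Ric)
    let F := ((UniqueFactorizationMonoid.normalizedFactors (minpoly ℝ Ric)).toFinset.erase X)
    have hF : ∀ P ∈ F, P.Monic ∧ Irreducible P ∧ P ≠ X ∧ P ∣ minpoly ℝ Ric := by
      intro P hP
      rw [Finset.mem_erase, Multiset.mem_toFinset] at hP
      have hi := UniqueFactorizationMonoid.irreducible_of_normalized_factor _ hP.2
      refine ⟨?_, hi, hP.1, UniqueFactorizationMonoid.dvd_of_mem_normalizedFactors hP.2⟩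
      have := UniqueFactorizationMonoid.normalize_normalized_factor _ hP.2
      rw [← this]
      exact Polynomial.monic_normalize hi.ne_zero
    let s := insert none (F.attach.image fun P => some
      (⟨P.1, hF P.1 P.2⟩ : {P : Polynomial ℝ //
        P.Monic ∧ Irreducible P ∧ P ≠ X ∧ P ∣ minpoly ℝ Ric}))
    have hs : ∏ i ∈ s, p i = X * (X * ∏ P ∈ F, P) := by
      rw [Finset.prod_insert (by simp), Finset.prod_image]
      · rw [← Finset.prod_attach F (fun P => P)]
        simp only [p, Option.elim]
        ring
      · intro P _ Q _ h
        have h' := Option.some.inj h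
        exact Subtype.ext (Subtype.mk.inj h')
    have hnp : IsNilpotent (aeval Ric (X * ∏ P ∈ F, P)) := by
      let m := UniqueFactorizationMonoid.normalizedFactors (minpoly ℝ Ric)
      have hdvd : m.prod ∣ (X * ∏ P ∈ F, P) ^ (Multiset.card m) := by
        have : (Multiset.map (fun x : ℝ[X] => x) m).prod ∣
            (Multiset.map (fun _ : ℝ[X] => X * ∏ P ∈ F, P) m).prod := by
          apply Multiset.prod_dvd_prod_of_dvd
          intro P hP
          by_cases hPX : P = X
          · rw [hPX]; exact dvd_mul_right _ _
          · exact (Finset.dvd_prod_of_mem (fun P => P)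
              (Finset.mem_erase.2 ⟨hPX, Multiset.mem_toFinset.2 hP⟩)).mul_left _
        rwa [Multiset.map_id', Multiset.map_const', Multiset.prod_replicate] at this
      refine ⟨Multiset.card m, ?_⟩
      rw [← map_pow]
      rw [← minpoly.dvd_iff]
      exact (UniqueFactorizationMonoid.prod_normalizedFactors hχ).symm.dvd.trans hdvd
    have h0 := hnil _ hnp
    have h1 : aeval Ric (∏ i ∈ s, p i) = 0 := by
      rw [hs, map_mul, aeval_X, h0]
    have h2 := ker_prod_le Ric p hcop s
    rw [h1, LinearMap.ker_zero, top_le_iff] at h2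
    rw [← h2]
    exact iSup_congr hfp
  have hsep : ∀ o, ∀ x ∈ f o, (∀ y ∈ f o, B x y = 0) → x = 0 := by
    intro o x hx h
    apply hBnd.1
    have : (⨆ o, f o) ≤ LinearMap.ker (B x) := by
      apply iSup_le
      intro j y hy
      by_cases hj : o = j
      · subst hj; exact h y hy
      · exact horth o j hj x hx y hy
    intro y
    rw [hsup] at this
    exact this (Submodule.mem_top (x := y))
  refine ⟨?_, hsup, horth, ?_⟩
  · intro o
    rw [Submodule.disjoint_def]
    intro x hx hx'
    apply hsep o x hx
    intro y hy
    have : (⨆ j, ⨆ (_ : j ≠ o), f j) ≤ LinearMap.ker (B y) := by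
      refine iSup_le fun j => iSup_le fun hj => ?_
      intro z hz
      exact horth o j hj.symm y hy z hz
    rw [hB]
    exact this hx'
  · intro o
    constructor
    · intro x hx
      apply Subtype.ext
      exact hsep o x.1 x.2 (fun y hy => hx ⟨y, hy⟩)
    · intro x hx
      apply Subtype.ext
      exact hsep o x.1 x.2 (fun y hy => (hB _ _).trans (hx ⟨y, hy⟩))
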